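/- arXiv:1705.02212 — 5 statements merged into one kernel-verified Lean document; each statement's English description precedes it below -/
import Mathlib

section
/- Fix a mechanism m : A → A and a point x̃ ∈ A such that g ↦ C(m (g • x̃)) is μ-integrable and ⟨C⟩_{m,x̃} ≠ 0. Then the expected generic ratio of the Haar-randomized cause equals one: ∫_G ( C(m (g • x̃)) / ⟨C⟩_{m, g • x̃} ) dμ(g) = 1. In other words, if the cause is x = g • x̃ with g drawn from the Haar probability measure μ, then E_g [ C(m x) / ⟨C⟩_{m,x} ] = 1. -/
open MeasureTheory

/-- Expected Generic Contrast: `⟨C⟩_{m,x} = ∫_G C(m (g • x)) dμ(g)`. -/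
noncomputable def expectedGenericContrast {G : Type*} [Group G] [MeasurableSpace G]
    {A : Type*} [MulAction G A] (μ : Measure G) (C : A → ℝ) (m : A → A) (x : A) : ℝ :=
  ∫ g, C (m (g • x)) ∂μ

theorem expectedGenericContrast_smul {G : Type*} [Group G] [MeasurableSpace G] [MeasurableMul G]
    {A : Type*} [MulAction G A] (μ : Measure G) [μ.IsMulRightInvariant]
    (C : A → ℝ) (m : A → A) (g : G) (x : A) :
    expectedGenericContrast μ C m (g • x) = expectedGenericContrast μ C m x := by
  simp only [expectedGenericContrast, smul_smul]
  exact integral_mul_right_eq_self (fun h => C (m (h • x))) g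

theorem expected_generic_ratio_eq_one_general
    {G : Type*} [Group G] [MeasurableSpace G] [MeasurableMul G]
    {A : Type*} [MulAction G A] (μ : Measure G) [μ.IsMulRightInvariant]
    (m : A → A) (C : A → ℝ) (x : A) (hne : expectedGenericContrast μ C m x ≠ 0) :
    ∫ g, C (m (g • x)) / expectedGenericContrast μ C m (g • x) ∂μ = 1 :=
  calc
    ∫ g, C (m (g • x)) / expectedGenericContrast μ C m (g • x) ∂μ
    _ = ∫ g, C (m (g • x)) / expectedGenericContrast μ C m x ∂μ := by
      simp only [expectedGenericContrast_smul]
    _ = expectedGenericContrast μ C m x / expectedGenericContrast μ C m x :=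
      integral_div _ _
    _ = 1 := div_self hne

/-- the expected generic ratio of the Haar-randomized cause equals one. -/
theorem expected_generic_ratio_eq_one
    {G : Type*} [Group G] [TopologicalSpace G] [IsTopologicalGroup G] [CompactSpace G]
    [MeasurableSpace G] [BorelSpace G]
    {A : Type*} [MeasurableSpace A] [MulAction G A] [MeasurableSMul G A]
    (μ : Measure G) [μ.IsHaarMeasure] [IsProbabilityMeasure μ] [μ.IsMulRightInvariant]
    (m : A → A) (C : A → ℝ) (xt : A)
    (hint : Integrable (fun g => C (m (g • xt))) μ)
    (hne : expectedGenericContrast μ C m xt ≠ 0) :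
    ∫ g, C (m (g • xt)) / expectedGenericContrast μ C m (g • xt) ∂μ = 1 :=
  expected_generic_ratio_eq_one_general μ m C xt hne
end

section
/- Let n ≥ 1 and let μ be the Haar probability measure on the orthogonal group O(n). Then for every real n×n matrix M and every real symmetric positive semidefinite n×n matrix Σ, ∫_{O(n)} tr( M U Σ Uᵀ Mᵀ ) dμ(U) = (1/n) · tr(M Mᵀ) · tr(Σ). (The trace contrast is multiplicatively separable for the linear mechanism X ↦ M X with generic group O(n): the expected generic contrast of the covariance Σ of the cause under the mechanism M factorizes as K(M)·tr(Σ) with K(M) = tr(M Mᵀ)/n.) -/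
open MeasureTheory Matrix

noncomputable instance matrixMeasurableSpace (n : ℕ) :
    MeasurableSpace (Matrix (Fin n) (Fin n) ℝ) :=
  inferInstanceAs (MeasurableSpace (Fin n → Fin n → ℝ))

instance matrixBorelSpace (n : ℕ) : BorelSpace (Matrix (Fin n) (Fin n) ℝ) :=
  inferInstanceAs (BorelSpace (Fin n → Fin n → ℝ))

/-!
The twirl `E = ∫ U S U* dμ(U)` commutes with every unitary matrix `V`, because left invariance of
`μ` gives `V E V* = E`. The commutant of the unitary group consists of the scalar matrices, and
`tr E = tr S`, so `E = (tr S / n) • 1`. The contrast is then computed from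
`tr (M U S U* N) = tr (N M U S U*)` by integrating inside the trace.
-/

section Commutant

lemma commute_isStarProjection_of_commute_unitary {R : Type*} [Ring R] [StarRing R]
    (h2 : IsSMulRegular R 2) {a p : R} (ha : ∀ u ∈ unitary R, Commute u a)
    (hp : IsStarProjection p) : Commute p a := by
  have h_reflection : Commute (2 * p - 1) a := ha _ hp.two_mul_sub_one_mem_unitary
  have h_double : Commute (2 * p) a := by
    simpa only [sub_add_cancel] using h_reflection.add_left (Commute.one_left a)
  apply h2
  simpa only [nsmul_eq_mul, Nat.cast_ofNat, mul_assoc, (Commute.ofNat_right a 2).left_comm]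
    using h_double.eq

variable {ι R : Type*} [Fintype ι] [DecidableEq ι]

lemma isStarProjection_single_one [Semiring R] [StarRing R] (i : ι) :
    IsStarProjection (single i i (1 : R)) where
  isIdempotentElem := by simp [IsIdempotentElem]
  isSelfAdjoint := by simp [IsSelfAdjoint, star_eq_conjTranspose]

lemma permMatrix_mem_unitaryGroup [CommRing R] [StarRing R] (σ : Equiv.Perm ι) :
    σ.permMatrix R ∈ unitaryGroup ι R := by
  rw [mem_unitaryGroup_iff, star_eq_conjTranspose, conjTranspose_permMatrix, ← permMatrix_mul,
    inv_mul_cancel, permMatrix_one]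

lemma single_mul_permMatrix_swap [NonAssocSemiring R] (i j : ι) :
    single i i (1 : R) * (Equiv.swap i j).permMatrix R = single i j 1 := by
  rw [PEquiv.mul_toMatrix_toPEquiv]
  simpa only [Equiv.coe_refl, Equiv.refl_symm, id_eq, Equiv.symm_swap, Equiv.swap_apply_left] using
    submatrix_single_equiv (Equiv.refl ι) (Equiv.swap i j) i i (1 : R)

-- The unitaries used are the reflections `2 Eᵢᵢ - 1` and the permutation matrices of swaps, from
-- which every matrix unit arises as `Eᵢⱼ = Eᵢᵢ P₍ᵢⱼ₎`.
lemma mem_range_scalar_of_commute_unitaryGroup [CommRing R] [StarRing R]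
    (h2 : IsSMulRegular R 2) {A : Matrix ι ι R} (hA : ∀ V ∈ unitaryGroup ι R, Commute V A) :
    A ∈ Set.range (scalar ι) := by
  refine mem_range_scalar_iff_commute_single'.mpr fun i j => ?_
  rw [← single_mul_permMatrix_swap i j]
  have h_diagonal : Commute (single i i 1) A :=
    commute_isStarProjection_of_commute_unitary h2.matrix hA (isStarProjection_single_one i)
  exact h_diagonal.mul_left (hA _ (permMatrix_mem_unitaryGroup _))

lemma eq_trace_div_card_smul_one_of_mem_range_scalar {K : Type*} [DivisionRing K]
    (hι : (Fintype.card ι : K) ≠ 0) {A : Matrix ι ι K} (hA : A ∈ Set.range (scalar ι)) :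
    A = (A.trace / Fintype.card ι) • (1 : Matrix ι ι K) := by
  obtain ⟨c, rfl⟩ := hA
  simp [smul_one_eq_diagonal, (Nat.cast_commute _ c).eq, hι]

end Commutant

section Twirl

open scoped Matrix.Norms.L2Operator

variable {m ι 𝕜 : Type*} [Fintype m] [Fintype ι] [DecidableEq ι] [RCLike 𝕜]

-- Bochner integrals need a real normed space; Mathlib provides the L² operator norm over `𝕜` only.
noncomputable local instance l2OpRealNormedSpace : NormedSpace ℝ (Matrix m ι 𝕜) where
  norm_smul_le r A := by
    rw [RCLike.real_smul_eq_coe_smul (K := 𝕜) r A, norm_smul, RCLike.norm_ofReal, Real.norm_eq_abs]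

lemma integral_trace_mul {Ω : Type*} [MeasurableSpace Ω] {μ : Measure Ω}
    {F : Ω → Matrix m ι 𝕜} (hF : Integrable F μ) (A : Matrix ι m 𝕜) :
    ∫ ω, (A * F ω).trace ∂μ = (A * ∫ ω, F ω ∂μ).trace :=
  let φ : Matrix m ι 𝕜 →L[ℝ] 𝕜 :=
    LinearMap.toContinuousLinearMap (traceLinearMap ι ℝ 𝕜 ∘ₗ mulLeftLinearMap ι ℝ A)
  φ.integral_comp_comm hF

instance compactSpace_unitaryGroup : CompactSpace (unitaryGroup ι 𝕜) := by
  refine isCompact_iff_compactSpace.mp (IsCompact.of_isClosed_subset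
    (isCompact_univ_pi fun _ => isCompact_univ_pi fun _ => isCompact_closedBall (0 : 𝕜) 1)
    isClosed_unitary fun U hU i _ j _ => ?_)
  simpa using entry_norm_bound_of_unitary hU i j

/-- The twirl of `S` over a measure `μ` on the unitary group: the average of the conjugates of `S`
when `μ` is a probability measure. It is a Bochner integral, whose value does not depend on the
norm chosen on matrices. -/
noncomputable def unitaryTwirl [MeasurableSpace (unitaryGroup ι 𝕜)]
    (μ : Measure (unitaryGroup ι 𝕜)) (S : Matrix ι ι 𝕜) : Matrix ι ι 𝕜 :=
  ∫ U : unitaryGroup ι 𝕜, (U : Matrix ι ι 𝕜) * S * (U : Matrix ι ι 𝕜)ᴴ ∂μ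

variable [MeasurableSpace (unitaryGroup ι 𝕜)] [BorelSpace (unitaryGroup ι 𝕜)]
  (μ : Measure (unitaryGroup ι 𝕜))

lemma integrable_unitary_conj [IsFiniteMeasureOnCompacts μ] (S : Matrix ι ι 𝕜) :
    Integrable (fun U : unitaryGroup ι 𝕜 => (U : Matrix ι ι 𝕜) * S * (U : Matrix ι ι 𝕜)ᴴ) μ := by
  have h_cont : Continuous fun U : unitaryGroup ι 𝕜 =>
      (U : Matrix ι ι 𝕜) * S * (U : Matrix ι ι 𝕜)ᴴ := by fun_prop
  exact h_cont.integrable_of_hasCompactSupport (HasCompactSupport.of_compactSpace _)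

lemma commute_unitaryTwirl [IsFiniteMeasureOnCompacts μ] [μ.IsMulLeftInvariant]
    (S : Matrix ι ι 𝕜) {V : Matrix ι ι 𝕜} (hV : V ∈ unitaryGroup ι 𝕜) :
    Commute V (unitaryTwirl μ S) := by
  have hint := integrable_unitary_conj μ S
  have h_intertwine (U : unitaryGroup ι 𝕜) :
      V * (U * S * (U : Matrix ι ι 𝕜)ᴴ) = V * U * S * (V * (U : Matrix ι ι 𝕜))ᴴ * V := by
    have hVV : Vᴴ * V = 1 := mem_unitaryGroup_iff'.mp hV
    simp only [conjTranspose_mul, Matrix.mul_assoc, hVV, Matrix.mul_one]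
  calc V * unitaryTwirl μ S
      = ∫ U : unitaryGroup ι 𝕜, V * (U * S * (U : Matrix ι ι 𝕜)ᴴ) ∂μ :=
        (integral_const_mul_of_integrable hint).symm
    _ = ∫ U : unitaryGroup ι 𝕜, V * U * S * (V * (U : Matrix ι ι 𝕜))ᴴ * V ∂μ := by
        simp only [h_intertwine]
    _ = ∫ U : unitaryGroup ι 𝕜, U * S * (U : Matrix ι ι 𝕜)ᴴ * V ∂μ :=
        integral_mul_left_eq_self (μ := μ)
          (fun U : unitaryGroup ι 𝕜 => U * S * (U : Matrix ι ι 𝕜)ᴴ * V) ⟨V, hV⟩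
    _ = unitaryTwirl μ S * V := integral_mul_const_of_integrable hint

lemma trace_unitaryTwirl [IsProbabilityMeasure μ] (S : Matrix ι ι 𝕜) :
    (unitaryTwirl μ S).trace = S.trace := by
  have h_trace (U : unitaryGroup ι 𝕜) :
      (U * S * (U : Matrix ι ι 𝕜)ᴴ).trace = S.trace := by
    have hUU : (U : Matrix ι ι 𝕜)ᴴ * U = 1 := mem_unitaryGroup_iff'.mp U.2
    rw [trace_mul_cycle, hUU, Matrix.one_mul]
  calc (unitaryTwirl μ S).trace
      = (1 * unitaryTwirl μ S).trace := by rw [Matrix.one_mul]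
    _ = ∫ U : unitaryGroup ι 𝕜, (1 * (U * S * (U : Matrix ι ι 𝕜)ᴴ)).trace ∂μ :=
        (integral_trace_mul (integrable_unitary_conj μ S) 1).symm
    _ = S.trace := by
        simp only [Matrix.one_mul, h_trace, integral_const, probReal_univ, one_smul]

lemma unitaryTwirl_eq_smul_one [Nonempty ι] [μ.IsMulLeftInvariant] [IsProbabilityMeasure μ]
    (S : Matrix ι ι 𝕜) :
    unitaryTwirl μ S = (S.trace / Fintype.card ι) • (1 : Matrix ι ι 𝕜) := by
  have h_scalar : unitaryTwirl μ S ∈ Set.range (scalar ι) :=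
    mem_range_scalar_of_commute_unitaryGroup (nsmul_right_injective two_ne_zero)
      fun _ hV => commute_unitaryTwirl μ S hV
  rw [eq_trace_div_card_smul_one_of_mem_range_scalar
    (Nat.cast_ne_zero.mpr Fintype.card_ne_zero) h_scalar, trace_unitaryTwirl]

theorem trace_contrast_multiplicatively_separable_general
    [Nonempty ι] [μ.IsMulLeftInvariant] [IsProbabilityMeasure μ]
    (M : Matrix m ι 𝕜) (S : Matrix ι ι 𝕜) (N : Matrix ι m 𝕜) :
    ∫ U : unitaryGroup ι 𝕜, (M * (U : Matrix ι ι 𝕜) * S * (U : Matrix ι ι 𝕜)ᴴ * N).trace ∂μ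
      = (1 / Fintype.card ι) * (M * N).trace * S.trace := by
  have h_cycle (U : unitaryGroup ι 𝕜) :
      (M * (U : Matrix ι ι 𝕜) * S * (U : Matrix ι ι 𝕜)ᴴ * N).trace
        = (N * M * ((U : Matrix ι ι 𝕜) * S * (U : Matrix ι ι 𝕜)ᴴ)).trace := by
    rw [trace_mul_comm]
    simp only [Matrix.mul_assoc]
  calc ∫ U : unitaryGroup ι 𝕜, (M * (U : Matrix ι ι 𝕜) * S * (U : Matrix ι ι 𝕜)ᴴ * N).trace ∂μ
      = (N * M * unitaryTwirl μ S).trace := by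
        simp only [h_cycle]
        exact integral_trace_mul (integrable_unitary_conj μ S) (N * M)
    _ = (1 / Fintype.card ι) * (M * N).trace * S.trace := by
        rw [unitaryTwirl_eq_smul_one, mul_smul_comm, Matrix.mul_one, trace_smul, smul_eq_mul,
          trace_mul_comm N M]
        ring

end Twirl

/-- multiplicative separability of the trace contrast for linear
mechanisms with the orthogonal group as generic group:
`∫_{O(n)} tr(M U Σ Uᵀ Mᵀ) dμ(U) = (1/n)·tr(M Mᵀ)·tr(Σ)`. -/
theorem trace_contrast_multiplicatively_separable
    (n : ℕ) (hn : 1 ≤ n)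
    [BorelSpace (orthogonalGroup (Fin n) ℝ)]
    (μ : Measure (orthogonalGroup (Fin n) ℝ))
    [μ.IsHaarMeasure] [IsProbabilityMeasure μ]
    (M : Matrix (Fin n) (Fin n) ℝ)
    (S : Matrix (Fin n) (Fin n) ℝ) (hS : S.PosSemidef) :
    (∫ U : orthogonalGroup (Fin n) ℝ,
        (M * (U : Matrix (Fin n) (Fin n) ℝ) * S * (U : Matrix (Fin n) (Fin n) ℝ)ᵀ * Mᵀ).trace ∂μ)
      = (1 / n) * (M * Mᵀ).trace * S.trace := by
  have : Nonempty (Fin n) := ⟨⟨0, hn⟩⟩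
  simpa only [conjTranspose_eq_transpose_of_trivial, Fintype.card_fin] using
    trace_contrast_multiplicatively_separable_general (𝕜 := ℝ) μ M S Mᵀ
end

section
/- Let f : [0,1] → [0,1] be a strictly increasing C¹ bijection with f(0)=0, f(1)=1 and f'(x) > 0 for all x, and let p be a probability density on the circle ℝ/ℤ, identified with a measurable function p : [0,1) → ℝ≥0 of integral 1 extended 1-periodically, with p·log p and log f' integrable. For t ∈ [0,1] let p_t(x) := p(x − t mod 1) be the translated density, and let (f·p_t)(y) := p_t(f⁻¹(y))/f'(f⁻¹(y)) be its pushforward under f. Then the expected generic contrast of the negative entropy contrast under the generic group of circle translations satisfies ∫₀¹ ( ∫₀¹ (f·p_t)(y) log (f·p_t)(y) dy ) dt = ∫₀¹ p(x) log p(x) dx − ∫₀¹ log f'(x) dx. (The negative entropy contrast is additively separable with K(f) = −∫₀¹ log f'.) -/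
open MeasureTheory Set

/-!
Substituting `y = f x` gives, for every density `q`,
`∫ (f·q) log (f·q) = ∫ q log q - ∫ q log f'`. For `q = p_t` the first term does not depend on `t`,
the measure being translation invariant. In the second term Fubini's theorem lets us average over
`t` first: for each `x` the mean of `t ↦ p (x - t)` over a period is the total mass of `p`, which
is `1`, so the averaged term is `∫ log f'`.
-/

theorem mul_div_mul_log_div {a c : ℝ} (ha : 0 ≤ a) (hc : 0 < c) :
    c * (a / c * Real.log (a / c)) = a * Real.log a - a * Real.log c := by
  rcases ha.eq_or_lt with rfl | ha
  · simp
  · rw [Real.log_div ha.ne' hc.ne']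
    field_simp

theorem setIntegral_image_pushforward_mul_log {s : Set ℝ} {f f' finv q : ℝ → ℝ}
    (hs : MeasurableSet s)
    (hderiv : ∀ x ∈ s, HasDerivWithinAt f (f' x) s x)
    (hpos : ∀ᵐ x ∂volume.restrict s, 0 < f' x) (hfinv : LeftInvOn finv f s)
    (hq_nonneg : ∀ x ∈ s, 0 ≤ q x)
    (hq_log : IntegrableOn (fun x ↦ q x * Real.log (q x)) s)
    (hq_log_deriv : IntegrableOn (fun x ↦ q x * Real.log (f' x)) s) :
    ∫ y in f '' s, q (finv y) / f' (finv y) * Real.log (q (finv y) / f' (finv y)) =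
      (∫ x in s, q x * Real.log (q x)) - ∫ x in s, q x * Real.log (f' x) := by
  rw [integral_image_eq_integral_abs_deriv_smul hs hderiv hfinv.injOn,
    ← integral_sub hq_log hq_log_deriv]
  refine integral_congr_ae ?_
  filter_upwards [hpos, ae_restrict_mem hs] with x hx hxs
  rw [hfinv hxs, abs_of_pos hx, smul_eq_mul, mul_div_mul_log_div (hq_nonneg x hxs) hx]

theorem aestronglyMeasurable_prod_comp_snd_sub_fst {G F : Type*} [AddGroup G] [MeasurableSpace G]
    [MeasurableAdd₂ G] [MeasurableNeg G] [TopologicalSpace F] {ν μ : Measure G} [SFinite ν]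
    [ν.IsAddRightInvariant] [ν.IsNegInvariant] [SFinite μ] {p : G → F}
    (hp : AEStronglyMeasurable p ν) :
    AEStronglyMeasurable (fun z : G × G ↦ p (z.2 - z.1)) (ν.prod μ) := by
  have hp_neg : AEStronglyMeasurable (fun u ↦ p (-u)) ν :=
    hp.comp_measurePreserving (Measure.measurePreserving_neg ν)
  have hp_neg_sub : AEStronglyMeasurable (fun z : G × G ↦ p (-(z.1 - z.2))) (ν.prod μ) :=
    hp_neg.comp_quasiMeasurePreserving (quasiMeasurePreserving_sub_of_right_invariant ν μ)
  simpa only [neg_sub] using hp_neg_sub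

section Periodic

variable {E : Type*} [NormedAddCommGroup E] {T : ℝ}

theorem intervalIntegrable_periodic_comp_sub_right {p : ℝ → E} (hp : Function.Periodic p T)
    (hT : T ≠ 0) (hp_int : IntervalIntegrable p volume 0 T) (a b t : ℝ) :
    IntervalIntegrable (fun x ↦ p (x - t)) volume a b := by
  simpa using (hp.intervalIntegrable₀ hT hp_int (a - t) (b - t)).comp_sub_right t

theorem intervalIntegrable_periodic_comp_sub_left {p : ℝ → E} (hp : Function.Periodic p T)
    (hT : T ≠ 0) (hp_int : IntervalIntegrable p volume 0 T) (a b x : ℝ) :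
    IntervalIntegrable (fun t ↦ p (x - t)) volume a b := by
  simpa using (hp.intervalIntegrable₀ hT hp_int (x - a) (x - b)).comp_sub_left x

theorem locallyIntegrable_of_periodic {p : ℝ → E} (hp : Function.Periodic p T) (hT : T ≠ 0)
    (hp_int : IntervalIntegrable p volume 0 T) : LocallyIntegrable p := fun x ↦
  ⟨Icc (x - 1) (x + 1), Icc_mem_nhds (by linarith) (by linarith),
    (intervalIntegrable_iff_integrableOn_Icc_of_le (by linarith)).1
      (hp.intervalIntegrable₀ hT hp_int _ _)⟩

variable [NormedSpace ℝ E]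

theorem intervalIntegral_periodic_comp_sub_right {p : ℝ → E} (hp : Function.Periodic p T)
    (t : ℝ) : ∫ x in (0 : ℝ)..T, p (x - t) = ∫ x in (0 : ℝ)..T, p x := by
  simpa [sub_eq_neg_add] using hp.intervalIntegral_add_eq (-t) 0

theorem intervalIntegral_periodic_comp_sub_left {p : ℝ → E} (hp : Function.Periodic p T)
    (x : ℝ) : ∫ t in (0 : ℝ)..T, p (x - t) = ∫ t in (0 : ℝ)..T, p t := by
  simpa using hp.intervalIntegral_add_eq (x - T) 0

variable {p : ℝ → ℝ} {μ : Measure ℝ} [SFinite μ] {g : ℝ → E}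

theorem integrable_prod_periodic_comp_sub_smul (hp : Function.Periodic p T) (hT : 0 < T)
    (hp_int : IntervalIntegrable p volume 0 T) (hg : Integrable g μ) :
    Integrable (fun z : ℝ × ℝ ↦ p (z.2 - z.1) • g z.2)
      ((volume.restrict (Ioc 0 T)).prod μ) := by
  have hp_meas : AEStronglyMeasurable (fun z : ℝ × ℝ ↦ p (z.2 - z.1))
      ((volume.restrict (Ioc 0 T)).prod μ) :=
    (aestronglyMeasurable_prod_comp_snd_sub_fst
      (locallyIntegrable_of_periodic hp hT.ne' hp_int).aestronglyMeasurable).mono_ac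
      (Measure.restrict_le_self.absolutelyContinuous.prod .rfl)
  have h_norm (x : ℝ) : ∫ t in Ioc 0 T, ‖p (x - t) • g x‖ = (∫ t in (0 : ℝ)..T, ‖p t‖) * ‖g x‖ := by
    have hp_norm : Function.Periodic (fun u ↦ ‖p u‖) T := hp.comp norm
    simp only [norm_smul]
    rw [integral_mul_const, ← intervalIntegral.integral_of_le hT.le,
      intervalIntegral_periodic_comp_sub_left hp_norm]
  refine (integrable_prod_iff' (hp_meas.smul hg.aestronglyMeasurable.comp_snd)).2
    ⟨.of_forall fun x ↦ ?_, ?_⟩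
  · exact ((intervalIntegrable_iff_integrableOn_Ioc_of_le hT.le).1
      (intervalIntegrable_periodic_comp_sub_left hp hT.ne' hp_int 0 T x)).smul_const (g x)
  · simpa only [Pi.smul_apply', h_norm] using hg.norm.const_mul (∫ t in (0 : ℝ)..T, ‖p t‖)

theorem intervalIntegral_integral_periodic_comp_sub_smul [CompleteSpace E]
    (hp : Function.Periodic p T) (hT : 0 < T) (hp_int : IntervalIntegrable p volume 0 T)
    (hg : Integrable g μ) :
    ∫ t in (0 : ℝ)..T, ∫ x, p (x - t) • g x ∂μ = (∫ t in (0 : ℝ)..T, p t) • ∫ x, g x ∂μ := by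
  have h_mean (x : ℝ) : ∫ t in Ioc 0 T, p (x - t) • g x = (∫ t in (0 : ℝ)..T, p t) • g x := by
    rw [integral_smul_const, ← intervalIntegral.integral_of_le hT.le,
      intervalIntegral_periodic_comp_sub_left hp]
  rw [intervalIntegral.integral_of_le hT.le,
    integral_integral_swap (integrable_prod_periodic_comp_sub_smul hp hT hp_int hg)]
  simp only [h_mean, integral_smul]

end Periodic

section Circle

variable {f f' finv p : ℝ → ℝ}

-- Only almost every `t`: if `log f'` is unbounded, `p (x - t) * log (f' x)` need not be
-- integrable in `x` for every `t`.
theorem ae_integral_pushforward_translate_mul_log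
    (hbij : BijOn f (Icc 0 1) (Icc 0 1))
    (hderiv : ∀ x ∈ Icc (0 : ℝ) 1, HasDerivWithinAt f (f' x) (Icc 0 1) x)
    (hpos : ∀ᵐ x ∂volume.restrict (Icc (0 : ℝ) 1), 0 < f' x)
    (hfinv : LeftInvOn finv f (Icc 0 1))
    (hp_periodic : Function.Periodic p 1) (hp_nonneg : ∀ x, 0 ≤ p x)
    (hp_int : IntervalIntegrable p volume 0 1)
    (hint_plogp : IntervalIntegrable (fun x ↦ p x * Real.log (p x)) volume 0 1)
    (hint_logf' : IntegrableOn (fun x ↦ Real.log (f' x)) (Icc 0 1)) :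
    ∀ᵐ t ∂volume.restrict (Ioc (0 : ℝ) 1),
      ∫ y in (0 : ℝ)..1, p (finv y - t) / f' (finv y) * Real.log (p (finv y - t) / f' (finv y)) =
        (∫ x in (0 : ℝ)..1, p x * Real.log (p x)) -
          ∫ x in Icc 0 1, p (x - t) * Real.log (f' x) := by
  have hplogp_periodic : Function.Periodic (fun x ↦ p x * Real.log (p x)) 1 :=
    hp_periodic.comp fun a ↦ a * Real.log a
  filter_upwards [(integrable_prod_periodic_comp_sub_smul hp_periodic one_pos hp_int
    hint_logf').prod_right_ae] with t ht
  have hplogp_translate := (intervalIntegrable_iff_integrableOn_Icc_of_le zero_le_one).1 <|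
    intervalIntegrable_periodic_comp_sub_right hplogp_periodic one_ne_zero hint_plogp 0 1 t
  have h_image := setIntegral_image_pushforward_mul_log measurableSet_Icc hderiv hpos hfinv
    (fun x _ ↦ hp_nonneg (x - t)) hplogp_translate ht
  rw [← intervalIntegral_periodic_comp_sub_right hplogp_periodic t]
  simpa only [hbij.image_eq, intervalIntegral.integral_of_le zero_le_one,
    integral_Icc_eq_integral_Ioc] using h_image

theorem neg_entropy_additively_separable_circle_general
    (hbij : BijOn f (Icc 0 1) (Icc 0 1))
    (hderiv : ∀ x ∈ Icc (0 : ℝ) 1, HasDerivWithinAt f (f' x) (Icc 0 1) x)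
    (hpos : ∀ᵐ x ∂volume.restrict (Icc (0 : ℝ) 1), 0 < f' x)
    (hfinv : LeftInvOn finv f (Icc 0 1))
    (hp_periodic : Function.Periodic p 1) (hp_nonneg : ∀ x, 0 ≤ p x)
    (hp_prob : ∫ x in (0 : ℝ)..1, p x = 1)
    (hint_plogp : IntervalIntegrable (fun x ↦ p x * Real.log (p x)) volume 0 1)
    (hint_logf' : IntervalIntegrable (fun x ↦ Real.log (f' x)) volume 0 1) :
    ∫ t in (0 : ℝ)..1, ∫ y in (0 : ℝ)..1,
        p (finv y - t) / f' (finv y) * Real.log (p (finv y - t) / f' (finv y)) =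
      (∫ x in (0 : ℝ)..1, p x * Real.log (p x)) - ∫ x in (0 : ℝ)..1, Real.log (f' x) := by
  have hp_int : IntervalIntegrable p volume 0 1 :=
    intervalIntegral.intervalIntegrable_of_integral_ne_zero (by simp [hp_prob])
  rw [intervalIntegrable_iff_integrableOn_Icc_of_le zero_le_one] at hint_logf'
  have h_average : ∫ t in (0 : ℝ)..1, ∫ x in Icc 0 1, p (x - t) * Real.log (f' x) =
      ∫ x in (0 : ℝ)..1, Real.log (f' x) := by
    have := intervalIntegral_integral_periodic_comp_sub_smul hp_periodic one_pos hp_int hint_logf'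
    rwa [hp_prob, one_smul, integral_Icc_eq_integral_Ioc,
      ← intervalIntegral.integral_of_le zero_le_one] at this
  have h_average_int : IntervalIntegrable
      (fun t ↦ ∫ x in Icc 0 1, p (x - t) * Real.log (f' x)) volume 0 1 :=
    (intervalIntegrable_iff_integrableOn_Ioc_of_le zero_le_one).2
      (integrable_prod_periodic_comp_sub_smul hp_periodic one_pos hp_int
        hint_logf').integral_prod_left
  calc
    _ = ∫ t in (0 : ℝ)..1, ((∫ x in (0 : ℝ)..1, p x * Real.log (p x)) -
          ∫ x in Icc 0 1, p (x - t) * Real.log (f' x)) := by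
      refine intervalIntegral.integral_congr_ae_restrict ?_
      rw [uIoc_of_le zero_le_one]
      exact ae_integral_pushforward_translate_mul_log hbij hderiv hpos hfinv hp_periodic
        hp_nonneg hp_int hint_plogp hint_logf'
    _ = _ := by
      rw [intervalIntegral.integral_sub intervalIntegrable_const h_average_int, h_average]
      simp

end Circle

/-- the negative entropy contrast is additively separable for the generic
group of circle translations: averaging over the translation `t` drawn uniformly on
`[0,1]`, the negative entropy of the pushforward under `f` of the translated density
`p_t(x) = p(x − t)` satisfies
`∫₀¹ ( ∫₀¹ (f·p_t) log (f·p_t) ) dt = ∫₀¹ p log p − ∫₀¹ log f'`. -/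
theorem neg_entropy_additively_separable_circle
    (f f' finv : ℝ → ℝ)
    (hmono : StrictMonoOn f (Icc 0 1))
    (hbij : Set.BijOn f (Icc 0 1) (Icc 0 1))
    (hderiv : ∀ x ∈ Icc (0:ℝ) 1, HasDerivAt f (f' x) x)
    (hcont : ContinuousOn f' (Icc 0 1))
    (hpos : ∀ x ∈ Icc (0:ℝ) 1, 0 < f' x)
    (h0 : f 0 = 0) (h1 : f 1 = 1)
    (hfinv_left : ∀ x ∈ Icc (0:ℝ) 1, finv (f x) = x)
    (hfinv_right : ∀ y ∈ Icc (0:ℝ) 1, f (finv y) = y)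
    (p : ℝ → ℝ)
    (hp_periodic : Function.Periodic p 1)
    (hp_nonneg : ∀ x : ℝ, 0 ≤ p x)
    (hp_prob : (∫ x in (0:ℝ)..1, p x) = 1)
    (hint_plogp : IntervalIntegrable (fun x => p x * Real.log (p x)) volume 0 1)
    (hint_logf' : IntervalIntegrable (fun x => Real.log (f' x)) volume 0 1) :
    (∫ t in (0:ℝ)..1,
        ∫ y in (0:ℝ)..1,
          (p (finv y - t) / f' (finv y)) * Real.log (p (finv y - t) / f' (finv y)))
      = (∫ x in (0:ℝ)..1, p x * Real.log (p x))
        - ∫ x in (0:ℝ)..1, Real.log (f' x) :=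
  neg_entropy_additively_separable_circle_general hbij
    (fun x hx ↦ (hderiv x hx).hasDerivWithinAt) (ae_restrict_of_forall_mem measurableSet_Icc hpos)
    hfinv_left hp_periodic hp_nonneg hp_prob hint_plogp hint_logf'
end

section
/- Let f : [0,1] → [0,1] be a strictly increasing C¹ bijection with f(0)=0, f(1)=1 and f'(x) > 0 for all x, and suppose f is not the identity map. Then K(f) + K(f⁻¹) > 0, where K(f) := −∫₀¹ log f'(x) dx; equivalently ∫₀¹ log f'(x) dx + ∫₀¹ log (f⁻¹)'(y) dy < 0. (This quantity equals D_KL(U ‖ f⁻¹·U) + D_KL(U ‖ f·U), the sum of the Kullback–Leibler divergences between the uniform distribution U on [0,1] and its pushforwards under f and f⁻¹, so the forward–backward condition for the negative entropy contrast holds for every non-identity mechanism f.) -/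
open MeasureTheory Set

/-!
Substituting `y = f x` turns `∫ log (f⁻¹)'` into `-∫ f' log f'`, so the two integrals add up to
`∫ (1 - f') log f'`. When `f` maps `[0, 1]` onto itself, this is minus the Jeffreys (symmetrised
Kullback–Leibler) divergence between the uniform distribution and its pushforward under `f⁻¹`, whose
density is `f'`. The integrand is nonpositive and vanishes only where `f' = 1`, hence identically
only when `f` is a translation.
-/

lemma one_sub_mul_log_neg {t : ℝ} (ht : 0 < t) (ht1 : t ≠ 1) : (1 - t) * Real.log t < 0 := by
  rcases ht1.lt_or_gt with hlt | hgt
  · exact mul_neg_of_pos_of_neg (sub_pos.mpr hlt) (Real.log_neg ht hlt)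
  · exact mul_neg_of_neg_of_pos (sub_neg.mpr hgt) (Real.log_pos hgt)

lemma one_sub_mul_log_nonpos {t : ℝ} (ht : 0 < t) : (1 - t) * Real.log t ≤ 0 := by
  rcases eq_or_ne t 1 with rfl | ht1
  · simp
  · exact (one_sub_mul_log_neg ht ht1).le

section Derivative

variable {a b : ℝ} {f f' : ℝ → ℝ}

lemma exists_hasDerivAt_ne_of_sub_ne_mul {m x : ℝ} (hf : ContinuousOn f (Icc a b))
    (hff' : ∀ y ∈ Ioo a b, HasDerivAt f (f' y) y) (hx : x ∈ Icc a b)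
    (hne : f x - f a ≠ m * (x - a)) : ∃ c ∈ Ioo a b, f' c ≠ m := by
  have hax : a < x := hx.1.lt_of_ne (by rintro rfl; simp at hne)
  obtain ⟨c, hc, hslope⟩ := exists_hasDerivAt_eq_slope f f' hax
    (hf.mono (Icc_subset_Icc_right hx.2)) fun y hy => hff' y (Ioo_subset_Ioo_right hx.2 hy)
  refine ⟨c, Ioo_subset_Ioo_right hx.2 hc, fun hcm => hne ?_⟩
  rw [← hcm, hslope, div_mul_cancel₀ _ (sub_pos.mpr hax).ne']

variable {finv : ℝ → ℝ}

lemma integral_comp_leftInvOn {E : Type*} [NormedAddCommGroup E] [NormedSpace ℝ E] (g : ℝ → E)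
    (hf : ContinuousOn f (uIcc a b)) (hff' : ∀ x ∈ uIoo a b, HasDerivAt f (f' x) x)
    (hf' : ∀ x ∈ uIoo a b, 0 ≤ f' x) (hinv : LeftInvOn finv f (uIoo a b)) :
    ∫ y in f a..f b, g (finv y) = ∫ x in a..b, f' x • g x := by
  rw [← intervalIntegral.integral_deriv_smul_comp_of_deriv_nonneg hf hff' hf']
  refine intervalIntegral.integral_congr_uIoo fun x hx => ?_
  simp only [Function.comp_apply, hinv hx]

lemma integral_log_deriv_add_integral_log_deriv_leftInvOn (hf : ContinuousOn f (uIcc a b))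
    (hff' : ∀ x ∈ uIoo a b, HasDerivAt f (f' x) x) (hcont : ContinuousOn f' (uIcc a b))
    (hpos : ∀ x ∈ uIcc a b, 0 < f' x) (hinv : LeftInvOn finv f (uIoo a b)) :
    (∫ x in a..b, Real.log (f' x)) + (∫ y in f a..f b, Real.log (1 / f' (finv y))) =
      ∫ x in a..b, (1 - f' x) * Real.log (f' x) := by
  have hlog : ContinuousOn (fun x => Real.log (f' x)) (uIcc a b) :=
    hcont.log fun x hx => (hpos x hx).ne'
  calc (∫ x in a..b, Real.log (f' x)) + (∫ y in f a..f b, Real.log (1 / f' (finv y)))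
      = (∫ x in a..b, Real.log (f' x)) - ∫ x in a..b, f' x * Real.log (f' x) := by
        rw [integral_comp_leftInvOn (fun x => Real.log (1 / f' x)) hf hff'
          (fun x hx => (hpos x (uIoo_subset_uIcc_self hx)).le) hinv]
        simp only [one_div, Real.log_inv, smul_eq_mul, mul_neg, intervalIntegral.integral_neg,
          sub_eq_add_neg]
    _ = ∫ x in a..b, (1 - f' x) * Real.log (f' x) := by
        rw [← intervalIntegral.integral_sub hlog.intervalIntegrable
          (hcont.fun_mul hlog).intervalIntegrable]
        simp only [sub_mul, one_mul]

lemma integral_one_sub_mul_log_neg {g : ℝ → ℝ} (hab : a < b) (hg : ContinuousOn g (Icc a b))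
    (hpos : ∀ x ∈ Icc a b, 0 < g x) (hne : ∃ c ∈ Icc a b, g c ≠ 1) :
    ∫ x in a..b, (1 - g x) * Real.log (g x) < 0 := by
  obtain ⟨c, hc, hgc⟩ := hne
  have hcont : ContinuousOn (fun x => (1 - g x) * Real.log (g x)) (Icc a b) :=
    (continuousOn_const.sub hg).mul (hg.log fun x hx => (hpos x hx).ne')
  simpa only [intervalIntegral.integral_zero] using
    intervalIntegral.integral_lt_integral_of_continuousOn_of_le_of_exists_lt hab hcont
      continuousOn_const (fun x hx => one_sub_mul_log_nonpos (hpos x (Ioc_subset_Icc_self hx)))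
      ⟨c, hc, one_sub_mul_log_neg (hpos c hc) hgc⟩

theorem neg_entropy_forward_backward_general (hf : ContinuousOn f (Icc a b))
    (hff' : ∀ x ∈ Ioo a b, HasDerivAt f (f' x) x) (hcont : ContinuousOn f' (Icc a b))
    (hpos : ∀ x ∈ Icc a b, 0 < f' x) (hinv : LeftInvOn finv f (Ioo a b))
    (hne : ∃ x ∈ Icc a b, f x - f a ≠ x - a) :
    (∫ x in a..b, Real.log (f' x)) + (∫ y in f a..f b, Real.log (1 / f' (finv y))) < 0 := by
  obtain ⟨x, hx, hxne⟩ := hne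
  obtain ⟨c, hc, hfc⟩ : ∃ c ∈ Ioo a b, f' c ≠ 1 :=
    exists_hasDerivAt_ne_of_sub_ne_mul hf hff' hx (by rwa [one_mul])
  have hab : a < b := hc.1.trans hc.2
  rw [← uIoo_of_lt hab] at hff' hinv
  rw [integral_log_deriv_add_integral_log_deriv_leftInvOn (by rwa [uIcc_of_lt hab]) hff'
    (by rwa [uIcc_of_lt hab]) (by rwa [uIcc_of_lt hab]) hinv]
  exact integral_one_sub_mul_log_neg hab hcont hpos ⟨c, Ioo_subset_Icc_self hc, hfc⟩

end Derivative

/-- forward–backward condition for the negative entropy contrast: for a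
strictly increasing C¹ bijection `f` of `[0,1]` fixing the endpoints, with positive
derivative and different from the identity, `K(f) + K(f⁻¹) > 0` where
`K(f) = −∫₀¹ log f'`; equivalently `∫₀¹ log f' + ∫₀¹ log (f⁻¹)' < 0`, with
`(f⁻¹)'(y) = 1/f'(f⁻¹(y))`. -/
theorem neg_entropy_forward_backward
    (f f' finv : ℝ → ℝ)
    (hmono : StrictMonoOn f (Icc 0 1))
    (hbij : Set.BijOn f (Icc 0 1) (Icc 0 1))
    (hderiv : ∀ x ∈ Icc (0:ℝ) 1, HasDerivAt f (f' x) x)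
    (hcont : ContinuousOn f' (Icc 0 1))
    (hpos : ∀ x ∈ Icc (0:ℝ) 1, 0 < f' x)
    (h0 : f 0 = 0) (h1 : f 1 = 1)
    (hfinv_left : ∀ x ∈ Icc (0:ℝ) 1, finv (f x) = x)
    (hfinv_right : ∀ y ∈ Icc (0:ℝ) 1, f (finv y) = y)
    (hfinv_deriv : ∀ y ∈ Icc (0:ℝ) 1, HasDerivAt finv (1 / f' (finv y)) y)
    (hne : ∃ x ∈ Icc (0:ℝ) 1, f x ≠ x) :
    (0 < (-∫ x in (0:ℝ)..1, Real.log (f' x))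
          + (-∫ y in (0:ℝ)..1, Real.log (1 / f' (finv y)))) ∧
    ((∫ x in (0:ℝ)..1, Real.log (f' x))
        + (∫ y in (0:ℝ)..1, Real.log (1 / f' (finv y))) < 0) := by
  have hneg := neg_entropy_forward_backward_general
    (fun x hx => (hderiv x hx).continuousAt.continuousWithinAt)
    (fun x hx => hderiv x (Ioo_subset_Icc_self hx)) hcont hpos
    (fun x hx => hfinv_left x (Ioo_subset_Icc_self hx)) (by simpa only [h0, sub_zero] using hne)
  rw [h0, h1] at hneg
  exact ⟨by linarith, hneg⟩
end

section
/- Assume the contrast C is G-invariant, i.e. C(g • a) = C(a) for all g ∈ G, a ∈ A. Fix a mechanism n : A → A and x ∈ A such that g ↦ C(n(g • x)) is μ-integrable and ⟨C⟩_{n,x} ≠ 0. For g ∈ G let n_g : A → A denote the conjugated mechanism a ↦ g • n(g⁻¹ • a). Then the expected generic ratio of the Haar-randomized mechanism equals one: ∫_G ( C(n_g(x)) / ⟨C⟩_{n_g, x} ) dμ(g) = 1. In other words, if the mechanism is M = g n g⁻¹ with g drawn from the Haar probability measure, then E_g [ C(M x)/⟨C⟩_{M,x} ] = 1. -/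
open MeasureTheory

/-! For an invariant contrast, left invariance of `μ` makes the denominator `⟨C⟩_{n_g, x}` constant
in `g`, and the numerator is `C (n (g⁻¹ • x))`, whose integral is `⟨C⟩_{n, x}` once `μ` is
inversion-invariant. A Haar probability measure is inversion-invariant because right translation
and inversion carry it to Haar probability measures, and there is only one of those. -/

section HaarProbability

variable {G : Type*} [Group G] [TopologicalSpace G] [IsTopologicalGroup G] [LocallyCompactSpace G]
  [MeasurableSpace G] [BorelSpace G] (μ : Measure G) [μ.IsHaarMeasure] [IsProbabilityMeasure μ]

theorem isMulRightInvariant_of_isHaarMeasure_of_isProbabilityMeasure : μ.IsMulRightInvariant where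
  map_mul_right_eq_self g :=
    have : IsProbabilityMeasure (μ.map (· * g)) :=
      Measure.isProbabilityMeasure_map (measurable_mul_const g).aemeasurable
    Measure.isHaarMeasure_eq_of_isProbabilityMeasure (μ.map (· * g)) μ

theorem isInvInvariant_of_isHaarMeasure_of_isProbabilityMeasure : μ.IsInvInvariant where
  inv_eq_self :=
    have : μ.IsMulRightInvariant := isMulRightInvariant_of_isHaarMeasure_of_isProbabilityMeasure μ
    have : IsProbabilityMeasure μ.inv :=
      Measure.isProbabilityMeasure_map measurable_inv.aemeasurable
    have : μ.inv.IsHaarMeasure := {}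
    Measure.isHaarMeasure_eq_of_isProbabilityMeasure μ.inv μ

end HaarProbability

section ExpectedGenericContrast

variable {G : Type*} [Group G] [MeasurableSpace G] {A : Type*} [MulAction G A]
  (μ : Measure G) (n : A → A) {C : A → ℝ} (x : A)

theorem expectedGenericContrast_smul_mechanism (hC : ∀ (g : G) (a : A), C (g • a) = C a) (g : G) :
    expectedGenericContrast μ C (fun a => g • n a) x = expectedGenericContrast μ C n x := by
  simp only [expectedGenericContrast, hC]

theorem expectedGenericContrast_mechanism_smul [MeasurableMul G] [μ.IsMulLeftInvariant]
    (g : G) :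
    expectedGenericContrast μ C (fun a => n (g • a)) x = expectedGenericContrast μ C n x := by
  simpa only [expectedGenericContrast, smul_smul] using
    integral_mul_left_eq_self (fun h => C (n (h • x))) g

theorem expectedGenericContrast_conj_mechanism [MeasurableMul G] [μ.IsMulLeftInvariant]
    (hC : ∀ (g : G) (a : A), C (g • a) = C a) (g : G) :
    expectedGenericContrast μ C (fun a => g • n (g⁻¹ • a)) x = expectedGenericContrast μ C n x :=
  (expectedGenericContrast_smul_mechanism μ (fun a => n (g⁻¹ • a)) x hC g).trans
    (expectedGenericContrast_mechanism_smul μ n x g⁻¹)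

theorem integral_contrast_conj_mechanism [MeasurableInv G] [μ.IsInvInvariant]
    (hC : ∀ (g : G) (a : A), C (g • a) = C a) :
    ∫ g : G, C (g • n (g⁻¹ • x)) ∂μ = expectedGenericContrast μ C n x := by
  simpa only [expectedGenericContrast, hC] using integral_inv_eq_self (fun g => C (n (g • x))) μ

theorem expected_generic_ratio_randomized_mechanism_eq_one_general
    [MeasurableMul G] [MeasurableInv G] [μ.IsMulLeftInvariant] [μ.IsInvInvariant]
    (hC : ∀ (g : G) (a : A), C (g • a) = C a) (hne : expectedGenericContrast μ C n x ≠ 0) :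
    ∫ g, C (g • n (g⁻¹ • x)) /
        expectedGenericContrast μ C (fun a => g • n (g⁻¹ • a)) x ∂μ = 1 :=
  calc
    _ = ∫ g : G, C (g • n (g⁻¹ • x)) / expectedGenericContrast μ C n x ∂μ := by
      simp only [expectedGenericContrast_conj_mechanism μ n x hC]
    _ = (∫ g : G, C (g • n (g⁻¹ • x)) ∂μ) / expectedGenericContrast μ C n x := integral_div _ _
    _ = 1 := by rw [integral_contrast_conj_mechanism μ n x hC, div_self hne]

end ExpectedGenericContrast

/-- the expected generic ratio of the Haar-randomized (conjugated)
mechanism equals one, for a `G`-invariant contrast. -/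
theorem expected_generic_ratio_randomized_mechanism_eq_one
    {G : Type*} [Group G] [TopologicalSpace G] [IsTopologicalGroup G] [CompactSpace G]
    [MeasurableSpace G] [BorelSpace G]
    {A : Type*} [MeasurableSpace A] [MulAction G A] [MeasurableSMul G A]
    (μ : Measure G) [μ.IsHaarMeasure] [IsProbabilityMeasure μ] [μ.IsMulRightInvariant]
    (n : A → A) (C : A → ℝ) (x : A)
    (hC : ∀ (g : G) (a : A), C (g • a) = C a)
    (hint : Integrable (fun g => C (n (g • x))) μ)
    (hne : expectedGenericContrast μ C n x ≠ 0) :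
    ∫ g, C (g • n (g⁻¹ • x)) /
        expectedGenericContrast μ C (fun a => g • n (g⁻¹ • a)) x ∂μ = 1 :=
  have : μ.IsInvInvariant := isInvInvariant_of_isHaarMeasure_of_isProbabilityMeasure μ
  expected_generic_ratio_randomized_mechanism_eq_one_general μ n x hC hne
end
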